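/- Let M be a positive integer, R an integer, and X, Y, D real numbers with X ≥ 0 and D ≥ 0. Then there are only finitely many 6-tuples (r₁, x₁, y₁, r₂, x₂, y₂) with r₁, r₂ ∈ ℤ and x₁, x₂, y₁, y₂ ∈ (1/M)ℤ satisfying: r₁ + r₂ = R, x₁ + x₂ = X, y₁ + y₂ = Y, x₁ ≥ 0, x₂ ≥ 0, 0 ≤ xᵢ² − 2yᵢrᵢ ≤ D for i = 1, 2, (r₁, r₂) ≠ (0, 0), and (y₁, y₂) ≠ (0, 0). -/

import Mathlib

/-- `x` lies in the lattice `(1/M)·ℤ`. -/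
def inLat (M : ℕ) (x : ℝ) : Prop := ∃ k : ℤ, x = (k : ℝ) / M

lemma lat_fin (M : ℕ) (hM : 0 < M) (B : ℝ) : Set.Finite {x : ℝ | inLat M x ∧ |x| ≤ B} := by
  have hM' : (0:ℝ) < M := by exact_mod_cast hM
  refine ((Set.finite_Icc (-⌈M * B⌉) ⌈M * B⌉).image (fun k : ℤ => (k : ℝ) / M)).subset ?_
  rintro x ⟨⟨k, rfl⟩, hk⟩
  refine ⟨k, ?_, rfl⟩
  rw [abs_div, abs_of_pos hM', div_le_iff₀ hM'] at hk
  have h2 : |(k:ℝ)| ≤ (⌈M * B⌉ : ℤ) := by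
    have := Int.le_ceil ((M:ℝ) * B)
    linarith
  have h3 : |k| ≤ ⌈M * B⌉ := by exact_mod_cast h2
  exact abs_le.mp h3

lemma int_fin (B : ℝ) : Set.Finite {k : ℤ | |(k : ℝ)| ≤ B} := by
  refine (Set.finite_Icc (-⌈B⌉) ⌈B⌉).subset ?_
  intro k hk
  have h2 : |(k:ℝ)| ≤ (⌈B⌉ : ℤ) := le_trans hk (Int.le_ceil _)
  have h3 : |k| ≤ ⌈B⌉ := by exact_mod_cast h2
  exact abs_le.mp h3

lemma key (M : ℕ) (hM : 0 < M) (C y : ℝ) (r : ℤ) (hy : inLat M y) (hC : |y * r| ≤ C)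
    (hy0 : y ≠ 0) (hr0 : r ≠ 0) : |(r : ℝ)| ≤ M * C ∧ |y| ≤ C := by
  have hM' : (0:ℝ) < M := by exact_mod_cast hM
  have h1 : (1:ℝ) ≤ |(r : ℝ)| := by exact_mod_cast Int.one_le_abs hr0
  rw [abs_mul] at hC
  have hya := abs_nonneg y
  refine ⟨?_, by nlinarith⟩
  obtain ⟨k, rfl⟩ := hy
  have hk : k ≠ 0 := by
    rintro rfl
    simp at hy0
  have h2 : (1:ℝ) ≤ |(k : ℝ)| := by exact_mod_cast Int.one_le_abs hk
  rw [abs_div, abs_of_pos hM', div_mul_eq_mul_div, div_le_iff₀ hM'] at hC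
  nlinarith

lemma bnd (M : ℕ) (hM : 0 < M) (C y₁ y₂ Y : ℝ) (r₁ r₂ R : ℤ) (hC : 0 ≤ C)
    (l₁ : inLat M y₁) (l₂ : inLat M y₂)
    (hr : r₁ + r₂ = R) (hy : y₁ + y₂ = Y) (h₁ : |y₁ * r₁| ≤ C) (h₂ : |y₂ * r₂| ≤ C)
    (n₁ : ¬(r₁ = 0 ∧ r₂ = 0)) (n₂ : ¬(y₁ = 0 ∧ y₂ = 0)) :
    (|(r₁ : ℝ)| ≤ M * C + |(R : ℝ)| ∧ |(r₂ : ℝ)| ≤ M * C + |(R : ℝ)|) ∧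
      (|y₁| ≤ C + |Y| ∧ |y₂| ≤ C + |Y|) := by
  have hMC : (0:ℝ) ≤ M * C := by positivity
  have e1 : (r₁ : ℝ) + r₂ = R := by exact_mod_cast hr
  have a1 : |(r₁ : ℝ)| ≤ |(r₂ : ℝ)| + |(R : ℝ)| := by
    rw [← e1]; have := abs_sub_abs_le_abs_sub (r₁ : ℝ) (-r₂); simp at this; linarith
  have a2 : |(r₂ : ℝ)| ≤ |(r₁ : ℝ)| + |(R : ℝ)| := by
    rw [← e1]; have := abs_sub_abs_le_abs_sub (r₂ : ℝ) (-r₁); simp [add_comm] at this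
    rw [add_comm (r₁ : ℝ)] at *; linarith
  have b1 : |y₁| ≤ |y₂| + |Y| := by
    rw [← hy]; have := abs_sub_abs_le_abs_sub y₁ (-y₂); simp at this; linarith
  have b2 : |y₂| ≤ |y₁| + |Y| := by
    rw [← hy, add_comm y₁]; have := abs_sub_abs_le_abs_sub y₂ (-y₁); simp at this; linarith
  have p1 := abs_nonneg (R : ℝ)
  have p2 := abs_nonneg Y
  by_cases c1 : y₁ ≠ 0 ∧ r₁ ≠ 0
  · obtain ⟨u, v⟩ := key M hM C y₁ r₁ l₁ h₁ c1.1 c1.2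
    refine ⟨⟨?_, ?_⟩, ?_, ?_⟩ <;> linarith
  by_cases c2 : y₂ ≠ 0 ∧ r₂ ≠ 0
  · obtain ⟨u, v⟩ := key M hM C y₂ r₂ l₂ h₂ c2.1 c2.2
    refine ⟨⟨?_, ?_⟩, ?_, ?_⟩ <;> linarith
  have c3 : (y₁ = 0 ∧ r₂ = 0) ∨ (r₁ = 0 ∧ y₂ = 0) := by tauto
  rcases c3 with ⟨h, h'⟩ | ⟨h, h'⟩
  · subst h h'
    simp at *
    refine ⟨⟨?_, ?_⟩, ?_, ?_⟩ <;> linarith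
  · subst h h'
    simp at *
    refine ⟨⟨?_, ?_⟩, ?_, ?_⟩ <;> linarith

theorem stmt9 (M : ℕ) (hM : 0 < M) (R : ℤ) (X Y D : ℝ) (hX : 0 ≤ X) (hD : 0 ≤ D) :
    Set.Finite {t : ℤ × ℝ × ℝ × ℤ × ℝ × ℝ |
      inLat M t.2.1 ∧ inLat M t.2.2.1 ∧ inLat M t.2.2.2.2.1 ∧ inLat M t.2.2.2.2.2 ∧
      t.1 + t.2.2.2.1 = R ∧
      t.2.1 + t.2.2.2.2.1 = X ∧
      t.2.2.1 + t.2.2.2.2.2 = Y ∧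
      0 ≤ t.2.1 ∧ 0 ≤ t.2.2.2.2.1 ∧
      0 ≤ t.2.1 ^ 2 - 2 * t.2.2.1 * (t.1 : ℝ) ∧
      t.2.1 ^ 2 - 2 * t.2.2.1 * (t.1 : ℝ) ≤ D ∧
      0 ≤ t.2.2.2.2.1 ^ 2 - 2 * t.2.2.2.2.2 * (t.2.2.2.1 : ℝ) ∧
      t.2.2.2.2.1 ^ 2 - 2 * t.2.2.2.2.2 * (t.2.2.2.1 : ℝ) ≤ D ∧
      ¬(t.1 = 0 ∧ t.2.2.2.1 = 0) ∧
      ¬(t.2.2.1 = 0 ∧ t.2.2.2.2.2 = 0)} := by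
  have fr := int_fin (M * (X ^ 2 + D) + |(R : ℝ)|)
  have fx := lat_fin M hM X
  have fy := lat_fin M hM ((X ^ 2 + D) + |Y|)
  refine (fr.prod (fx.prod (fy.prod (fr.prod (fx.prod fy))))).subset ?_
  rintro ⟨r₁, x₁, y₁, r₂, x₂, y₂⟩ ⟨lx₁, ly₁, lx₂, ly₂, hr, hx, hy, p₁, p₂, q₁, q₁', q₂, q₂', n₁, n₂⟩
  dsimp only at *
  have s₁ : x₁ ^ 2 ≤ X ^ 2 := by nlinarith
  have s₂ : x₂ ^ 2 ≤ X ^ 2 := by nlinarith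
  have t₁ := sq_nonneg x₁
  have t₂ := sq_nonneg x₂
  obtain ⟨⟨u1, u2⟩, u3, u4⟩ := bnd M hM (X ^ 2 + D) y₁ y₂ Y r₁ r₂ R (by positivity) ly₁ ly₂ hr hy
    (abs_le.mpr ⟨by linarith, by linarith⟩) (abs_le.mpr ⟨by linarith, by linarith⟩) n₁ n₂
  exact ⟨u1, ⟨lx₁, by rw [abs_of_nonneg p₁]; linarith⟩, ⟨ly₁, u3⟩, u2,
    ⟨lx₂, by rw [abs_of_nonneg p₂]; linarith⟩, ⟨ly₂, u4⟩⟩
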